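/- Let Σ be an alphabet of size σ ≥ 2, let n ≥ 2, let t ≥ 0, and for each m ∈ ℕ let M_m(t) = E[e^{t·(m − L(T))}] for T uniformly random in Σᵐ. Then M_n(t) ≤ 1 + σ^{-1}·e^{2t}·M_{n−2}(t) + Σ_{ℓ=2}^{⌊n/2⌋} (σ−1)·σ^{−ℓ−1}·e^{2tℓ}·M_{n−2ℓ}(t). -/

import Mathlib

/-!
Condition on the shortest border of `T`. If `T` is unbordered then `L(T) = n` and `T` contributes
`1`. Otherwise the shortest border `u` has length `ℓ ≤ n / 2` (a border longer than `n / 2`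
overlaps itself and yields a shorter one), so `T = u V u`. Since `V` is a factor of `T`,
`n - L(T) ≤ 2ℓ + (n - 2ℓ - L(V))`. Moreover, if `ℓ ≥ 2`, the first and last letters of `u`
differ, as otherwise `T` would have a border of length `1`. This is `exists_border_decomp`.

Hence at most `(σ - 1) σ^(ℓ-1)` words `u` occur for `ℓ ≥ 2` (`card_admissible_le`), and at most `σ`
for `ℓ = 1`. Summing over all pairs `(u, V)` as a union bound and dividing by `σ^n` gives the
recurrence.
-/

open Finset

/-- `S` has a border of length `ℓ`: `1 ≤ ℓ ≤ |S|` and the length-`ℓ` prefix of `S`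
equals its length-`ℓ` suffix. -/
def HasBorder {α : Type*} (S : List α) (ℓ : ℕ) : Prop :=
  1 ≤ ℓ ∧ ℓ ≤ S.length ∧ S.take ℓ = S.drop (S.length - ℓ)

/-- A string is unbordered if it has no proper border (no border of length `< |S|`). -/
def Unbordered {α : Type*} (S : List α) : Prop :=
  ∀ ℓ, ℓ < S.length → ¬ HasBorder S ℓ

/-- `maxUnb S` is `L(S)`: the maximum length of (nonempty) unbordered factors of `S`. -/
noncomputable def maxUnb {α : Type*} (S : List α) : ℕ :=
  sSup {k | ∃ T, T ≠ [] ∧ T <:+: S ∧ Unbordered T ∧ T.length = k}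

/-- `p > 0` is a period of `T` if `T[i] = T[i+p]` whenever both indices are valid. -/
def IsPeriod {α : Type*} (T : List α) (p : ℕ) : Prop :=
  0 < p ∧ ∀ (i : ℕ) (h : i + p < T.length),
    T[i]'(Nat.lt_of_le_of_lt (Nat.le_add_right i p) h) = T[i + p]'h

/-- `per T` is the shortest period of `T`. -/
noncomputable def per {α : Type*} (T : List α) : ℕ := sInf {p | IsPeriod T p}

/-- `borderF S` is `F(S)`: the length of the shortest border of `S`. -/
noncomputable def borderF {α : Type*} (S : List α) : ℕ := sInf {ℓ | HasBorder S ℓ}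

/-- `substr S i j` is the factor `S[i,j]` in 1-based closed-interval indexing. -/
def substr {α : Type*} (S : List α) (i j : ℕ) : List α := (S.drop (i - 1)).take (j + 1 - i)

theorem hasBorder_iff {α : Type*} (S : List α) (ℓ : ℕ) :
    HasBorder S ℓ ↔ 1 ≤ ℓ ∧ ℓ ≤ S.length ∧ ∀ i < ℓ, S[i]? = S[S.length - ℓ + i]? := by
  unfold HasBorder
  refine and_congr_right fun h1 => and_congr_right fun h2 => ?_
  constructor
  · intro h i hi
    have := congrArg (fun l : List α => l[i]?) h
    simpa [List.getElem?_take, hi] using this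
  · intro h
    apply List.ext_getElem?
    intro i
    by_cases hi : i < ℓ
    · simpa [List.getElem?_take, hi] using h i hi
    · have h3 : S.length ≤ S.length - ℓ + i := by omega
      simp [hi, h3]

/-- A bordered word splits as `u V u`, where `u` is its shortest border; the end letters of `u`
differ as soon as `|u| ≥ 2`. -/
theorem exists_border_decomp {α : Type*} (S : List α) (hS : ¬ Unbordered S) :
    ∃ u V : List α, S = u ++ V ++ u ∧ 1 ≤ u.length ∧
      (2 ≤ u.length → u[0]? ≠ u[u.length - 1]?) := by
  classical
  have hex : ∃ ℓ, ℓ < S.length ∧ HasBorder S ℓ := by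
    simpa [Unbordered] using hS
  obtain ⟨hlt, hb⟩ := Nat.find_spec hex
  have hmin : ∀ m < Nat.find hex, ¬ HasBorder S m := fun m hm hbm =>
    Nat.find_min hex hm ⟨hm.trans hlt, hbm⟩
  generalize Nat.find hex = ℓ at *
  have hb' := hb
  rw [hasBorder_iff] at hb
  obtain ⟨h1, h2, h3⟩ := hb
  have hhalf : 2 * ℓ ≤ S.length := by
    by_contra hcon
    -- the two occurrences overlap, and the overlap is again a border
    refine hmin (2 * ℓ - S.length) (by omega) ((hasBorder_iff _ _).2 ⟨by omega, by omega, ?_⟩)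
    intro i hi
    rw [h3 i (by omega), h3 (S.length - ℓ + i) (by omega)]
    congr 1
    omega
  have hlen : (S.take ℓ).length = ℓ := by simp [h2]
  refine ⟨S.take ℓ, (S.drop ℓ).take (S.length - 2 * ℓ), ?_, by omega, ?_⟩
  · conv_rhs => rw [List.append_assoc]
    conv_rhs => arg 2; arg 2; rw [hb'.2.2]
    have : S.drop (S.length - ℓ) = (S.drop ℓ).drop (S.length - 2 * ℓ) := by
      rw [List.drop_drop]; congr 1; omega
    rw [this, List.take_append_drop, List.take_append_drop]
  · rw [hlen]
    intro hℓ heq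
    refine hmin 1 (by omega) ((hasBorder_iff _ _).2 ⟨le_rfl, by omega, ?_⟩)
    intro i hi
    obtain rfl : i = 0 := by omega
    rw [List.getElem?_take, List.getElem?_take, if_pos (by omega), if_pos (by omega)] at heq
    rw [heq, h3 (ℓ - 1) (by omega)]
    congr 1
    omega

theorem bddAbove_unb {α : Type*} (S : List α) :
    BddAbove {k | ∃ T, T ≠ [] ∧ T <:+: S ∧ Unbordered T ∧ T.length = k} :=
  ⟨S.length, by rintro k ⟨T, -, h, -, rfl⟩; exact h.length_le⟩

theorem maxUnb_mono {α : Type*} {V S : List α} (h : V <:+: S) : maxUnb V ≤ maxUnb S := by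
  rcases Set.eq_empty_or_nonempty
    {k | ∃ T, T ≠ [] ∧ T <:+: V ∧ Unbordered T ∧ T.length = k} with he | hne
  · unfold maxUnb
    rw [he]
    simp
  · refine csSup_le_csSup (bddAbove_unb S) hne ?_
    rintro k ⟨T, h1, h2, h3⟩
    exact ⟨T, h1, h2.trans h, h3⟩

theorem length_le_maxUnb {α : Type*} {S : List α} (hne : S ≠ []) (h : Unbordered S) :
    S.length ≤ maxUnb S :=
  le_csSup (bddAbove_unb S) ⟨S, hne, List.infix_rfl, h, rfl⟩

open Classical in
/-- The words of length `ℓ` that can be shortest borders, as far as their end letters are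
concerned: no condition for `ℓ ≤ 1`, distinct end letters for `ℓ ≥ 2`. -/
noncomputable def admissible (Γ : Type) [Fintype Γ] (ℓ : ℕ) : Finset (Fin ℓ → Γ) :=
  univ.filter fun u => 2 ≤ ℓ → (List.ofFn u)[0]? ≠ (List.ofFn u)[ℓ - 1]?

theorem card_admissible_one (Γ : Type) [Fintype Γ] :
    (admissible Γ 1).card ≤ Fintype.card Γ := by
  refine (Finset.card_le_univ _).trans ?_
  simp

/-- The complement of the admissible words contains the image of the injection that appends to a
word of length `k + 1` its own first letter. -/
theorem card_admissible_le (Γ : Type) [Fintype Γ] (k : ℕ) :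
    (admissible Γ (k + 2)).card + Fintype.card Γ ^ (k + 1) ≤ Fintype.card Γ ^ (k + 2) := by
  classical
  let f : (Fin (k + 1) → Γ) → (Fin (k + 2) → Γ) := fun v => Fin.snoc (α := fun _ => Γ) v (v 0)
  have hf : Function.Injective f := by
    intro v w h
    have := congrArg (fun g : Fin (k + 2) → Γ => Fin.init (α := fun _ => Γ) g) h
    simpa [f] using this
  have hdisj : Disjoint (admissible Γ (k + 2)) (univ.image f) := by
    rw [Finset.disjoint_left]
    intro u hu hu'
    obtain ⟨v, -, rfl⟩ := Finset.mem_image.1 hu'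
    apply (Finset.mem_filter.1 hu).2 (by omega)
    have h0 : f v 0 = v 0 := by
      simp [f]
    have h1 : f v (Fin.last (k + 1)) = v 0 := by simp [f]
    rw [List.getElem?_ofFn, List.getElem?_ofFn, dif_pos (by omega), dif_pos (by omega)]
    exact congrArg some (h0.trans h1.symm)
  have h2 : (univ.image f).card = Fintype.card Γ ^ (k + 1) := by
    rw [Finset.card_image_of_injective _ hf]
    simp
  have h3 := Finset.card_le_univ (admissible Γ (k + 2) ∪ univ.image f)
  rw [Finset.card_union_of_disjoint hdisj, h2] at h3
  simpa using h3

open Classical in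
/-- The union bound over the possible decompositions `T = u V u`, for a fixed word `T`. -/
theorem exp_le_decomp (Γ : Type) [Fintype Γ] (n : ℕ) (hn : 2 ≤ n) (t : ℝ) (ht : 0 ≤ t)
    (T : Fin n → Γ) :
    Real.exp (t * ((n : ℝ) - (maxUnb (List.ofFn T) : ℝ))) ≤
      1 + ∑ ℓ ∈ Icc 1 (n / 2), ∑ u ∈ admissible Γ ℓ, ∑ V : Fin (n - 2 * ℓ) → Γ,
        if List.ofFn T = List.ofFn u ++ List.ofFn V ++ List.ofFn u then
          Real.exp (2 * t * ℓ) *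
            Real.exp (t * (((n - 2 * ℓ : ℕ) : ℝ) - (maxUnb (List.ofFn V) : ℝ)))
        else 0 := by
  have hpos : ∀ (ℓ : ℕ) (u : Fin ℓ → Γ) (V : Fin (n - 2 * ℓ) → Γ),
      0 ≤ if List.ofFn T = List.ofFn u ++ List.ofFn V ++ List.ofFn u then
          Real.exp (2 * t * ℓ) *
            Real.exp (t * (((n - 2 * ℓ : ℕ) : ℝ) - (maxUnb (List.ofFn V) : ℝ)))
        else 0 := by
    intro ℓ u V
    split_ifs <;> positivity
  by_cases hT : Unbordered (List.ofFn T)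
  · have h1 := length_le_maxUnb (S := List.ofFn T)
      (by intro h; have := congrArg List.length h; simp at this; omega) hT
    rw [List.length_ofFn] at h1
    have h2 : Real.exp (t * ((n : ℝ) - (maxUnb (List.ofFn T) : ℝ))) ≤ 1 := by
      rw [Real.exp_le_one_iff]
      have : (n : ℝ) ≤ maxUnb (List.ofFn T) := by exact_mod_cast h1
      nlinarith
    have h3 := Finset.sum_nonneg fun ℓ (_ : ℓ ∈ Icc 1 (n / 2)) =>
      Finset.sum_nonneg fun u (_ : u ∈ admissible Γ ℓ) =>
        Finset.sum_nonneg fun V (_ : V ∈ (univ : Finset (Fin (n - 2 * ℓ) → Γ))) => hpos ℓ u V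
    linarith
  · obtain ⟨u, V, hdec, hu1, hu2⟩ := exists_border_decomp _ hT
    have hlen : n = 2 * u.length + V.length := by
      have := congrArg List.length hdec
      simp at this
      omega
    obtain ⟨ℓ, hℓ⟩ : ∃ ℓ, u.length = ℓ := ⟨_, rfl⟩
    obtain ⟨u', rfl⟩ : ∃ u' : Fin ℓ → Γ, List.ofFn u' = u := by
      subst hℓ
      exact ⟨u.get, List.ofFn_get u⟩
    obtain ⟨V', rfl⟩ : ∃ V' : Fin (n - 2 * ℓ) → Γ, List.ofFn V' = V := by
      have : V.length = n - 2 * ℓ := by omega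
      rw [← this]
      exact ⟨V.get, List.ofFn_get V⟩
    rw [hℓ] at hlen hu1 hu2
    have hVS : List.ofFn V' <:+: List.ofFn T := ⟨List.ofFn u', List.ofFn u', hdec.symm⟩
    have hL : (maxUnb (List.ofFn V') : ℝ) ≤ maxUnb (List.ofFn T) := by
      exact_mod_cast maxUnb_mono hVS
    have hcast : ((n - 2 * ℓ : ℕ) : ℝ) = (n : ℝ) - 2 * ℓ := by
      rw [Nat.cast_sub (by omega)]
      push_cast
      ring
    have hterm : Real.exp (t * ((n : ℝ) - (maxUnb (List.ofFn T) : ℝ))) ≤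
        Real.exp (2 * t * ℓ) *
          Real.exp (t * (((n - 2 * ℓ : ℕ) : ℝ) - (maxUnb (List.ofFn V') : ℝ))) := by
      rw [← Real.exp_add, Real.exp_le_exp, hcast]
      nlinarith [mul_le_mul_of_nonneg_left hL ht]
    have hmemℓ : ℓ ∈ Icc 1 (n / 2) := by
      rw [Finset.mem_Icc]
      omega
    have hmemu : u' ∈ admissible Γ ℓ := by
      simp only [admissible, Finset.mem_filter, Finset.mem_univ, true_and]
      exact hu2
    have s1 := Finset.single_le_sum (s := Icc 1 (n / 2)) (f := fun ℓ =>
        ∑ u ∈ admissible Γ ℓ, ∑ V : Fin (n - 2 * ℓ) → Γ,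
        if List.ofFn T = List.ofFn u ++ List.ofFn V ++ List.ofFn u then
          Real.exp (2 * t * ℓ) *
            Real.exp (t * (((n - 2 * ℓ : ℕ) : ℝ) - (maxUnb (List.ofFn V) : ℝ)))
        else 0)
      (fun ℓ _ => Finset.sum_nonneg fun u _ => Finset.sum_nonneg fun V _ => hpos ℓ u V) hmemℓ
    have s2 := Finset.single_le_sum (s := admissible Γ ℓ) (f := fun u =>
        ∑ V : Fin (n - 2 * ℓ) → Γ,
        if List.ofFn T = List.ofFn u ++ List.ofFn V ++ List.ofFn u then
          Real.exp (2 * t * ℓ) *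
            Real.exp (t * (((n - 2 * ℓ : ℕ) : ℝ) - (maxUnb (List.ofFn V) : ℝ)))
        else 0)
      (fun u _ => Finset.sum_nonneg fun V _ => hpos ℓ u V) hmemu
    have s3 := Finset.single_le_sum (s := (univ : Finset (Fin (n - 2 * ℓ) → Γ))) (f := fun V =>
        if List.ofFn T = List.ofFn u' ++ List.ofFn V ++ List.ofFn u' then
          Real.exp (2 * t * ℓ) *
            Real.exp (t * (((n - 2 * ℓ : ℕ) : ℝ) - (maxUnb (List.ofFn V) : ℝ)))
        else 0)
      (fun V _ => hpos ℓ u' V) (Finset.mem_univ V')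
    simp only [if_pos hdec] at s3
    linarith

open Classical in
theorem sum_ite_ofFn_le {Γ : Type} [Fintype Γ] (n : ℕ) (S : List Γ) (c : ℝ) (hc : 0 ≤ c) :
    (∑ T : Fin n → Γ, if List.ofFn T = S then c else 0) ≤ c := by
  by_cases h : ∃ T₀ : Fin n → Γ, List.ofFn T₀ = S
  · obtain ⟨T₀, rfl⟩ := h
    simp [List.ofFn_inj]
  · push Not at h
    simp [h, hc]

/-- The recurrence before normalisation by `σ ^ n`. -/
theorem sum_exp_le (Γ : Type) [Fintype Γ] (n : ℕ) (hn : 2 ≤ n) (t : ℝ) (ht : 0 ≤ t) :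
    ∑ T : Fin n → Γ, Real.exp (t * ((n : ℝ) - (maxUnb (List.ofFn T) : ℝ))) ≤
      (Fintype.card Γ : ℝ) ^ n + ∑ ℓ ∈ Icc 1 (n / 2), ((admissible Γ ℓ).card : ℝ) *
        (Real.exp (2 * t * ℓ) * ∑ V : Fin (n - 2 * ℓ) → Γ,
          Real.exp (t * (((n - 2 * ℓ : ℕ) : ℝ) - (maxUnb (List.ofFn V) : ℝ)))) := by
  classical
  refine (Finset.sum_le_sum fun T _ => exp_le_decomp Γ n hn t ht T).trans ?_
  rw [Finset.sum_add_distrib]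
  refine add_le_add (by simp) ?_
  rw [Finset.sum_comm]
  refine Finset.sum_le_sum fun ℓ _ => ?_
  rw [Finset.sum_comm, ← nsmul_eq_mul]
  refine Finset.sum_le_card_nsmul _ _ _ fun u _ => ?_
  rw [Finset.sum_comm, Finset.mul_sum]
  exact Finset.sum_le_sum fun V _ => sum_ite_ofFn_le n _ _ (by positivity)

/-- with `M_m(t) = E[e^{t(m - L(T))}]` for uniformly random `T ∈ Σᵐ`, for
`σ ≥ 2`, `n ≥ 2` and `t ≥ 0` the recurrence
`M_n ≤ 1 + σ⁻¹e^{2t}M_{n-2} + Σ_{ℓ=2}^{⌊n/2⌋}(σ-1)σ^{-ℓ-1}e^{2tℓ}M_{n-2ℓ}` holds. -/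
theorem mgf_recurrence (σ : ℕ) (hσ : 2 ≤ σ) (Γ : Type) [Fintype Γ]
    (hcard : Fintype.card Γ = σ) (n : ℕ) (hn : 2 ≤ n) (t : ℝ) (ht : 0 ≤ t)
    (M : ℕ → ℝ)
    (hM : ∀ m : ℕ, M m =
      (∑ T : Fin m → Γ, Real.exp (t * ((m : ℝ) - (maxUnb (List.ofFn T) : ℝ)))) / (σ : ℝ) ^ m) :
    M n ≤ 1 + (σ : ℝ)⁻¹ * Real.exp (2 * t) * M (n - 2) +
      ∑ ℓ ∈ Finset.Icc 2 (n / 2),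
        ((σ : ℝ) - 1) * (σ : ℝ) ^ (-(ℓ : ℤ) - 1) * Real.exp (2 * t * ℓ) * M (n - 2 * ℓ) := by
  have hσ0 : (0 : ℝ) < σ := by exact_mod_cast (by omega : 0 < σ)
  have hsum : ∀ m : ℕ, ∑ T : Fin m → Γ, Real.exp (t * ((m : ℝ) - (maxUnb (List.ofFn T) : ℝ))) =
      (σ : ℝ) ^ m * M m := by
    intro m
    rw [mul_comm]
    exact ((eq_div_iff (pow_ne_zero m hσ0.ne')).1 (hM m)).symm
  have hM0 : ∀ m, 0 ≤ M m := by
    intro m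
    rw [hM m]
    exact div_nonneg (Finset.sum_nonneg fun T _ => (Real.exp_pos _).le) (pow_nonneg hσ0.le m)
  have key := sum_exp_le Γ n hn t ht
  simp only [hsum, hcard] at key
  have hterm : ∀ ℓ ∈ Icc 1 (n / 2), ∀ c : ℝ, ((admissible Γ ℓ).card : ℝ) ≤ c * (σ : ℝ) ^ (2 * ℓ) →
      ((admissible Γ ℓ).card : ℝ) *
        (Real.exp (2 * t * ℓ) * ((σ : ℝ) ^ (n - 2 * ℓ) * M (n - 2 * ℓ))) ≤
      (σ : ℝ) ^ n * (c * Real.exp (2 * t * ℓ) * M (n - 2 * ℓ)) := by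
    intro ℓ hℓ c hc
    rw [Finset.mem_Icc] at hℓ
    have hpow : (σ : ℝ) ^ n = (σ : ℝ) ^ (2 * ℓ) * (σ : ℝ) ^ (n - 2 * ℓ) := by
      rw [← pow_add]
      congr 1
      omega
    have h0 : 0 ≤ Real.exp (2 * t * ℓ) * ((σ : ℝ) ^ (n - 2 * ℓ) * M (n - 2 * ℓ)) :=
      mul_nonneg (by positivity) (mul_nonneg (by positivity) (hM0 _))
    refine (mul_le_mul_of_nonneg_right hc h0).trans (le_of_eq ?_)
    rw [hpow]
    ring
  have h1 := hterm 1 (by rw [Finset.mem_Icc]; omega) (σ : ℝ)⁻¹ (by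
    have h := card_admissible_one Γ
    rw [hcard] at h
    have h' : ((admissible Γ 1).card : ℝ) ≤ σ := by exact_mod_cast h
    refine h'.trans (le_of_eq ?_)
    field_simp)
  have h2 : ∀ ℓ ∈ Icc 2 (n / 2), _ := fun ℓ hℓ =>
    hterm ℓ (by rw [Finset.mem_Icc] at hℓ ⊢; omega) (((σ : ℝ) - 1) * (σ : ℝ) ^ (-(ℓ : ℤ) - 1)) (by
      rw [Finset.mem_Icc] at hℓ
      obtain ⟨k, rfl⟩ : ∃ k, ℓ = k + 2 := ⟨ℓ - 2, by omega⟩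
      have h := card_admissible_le Γ k
      rw [hcard] at h
      have h' : ((admissible Γ (k + 2)).card : ℝ) + (σ : ℝ) ^ (k + 1) ≤ (σ : ℝ) ^ (k + 2) := by
        exact_mod_cast h
      have he : (σ : ℝ) ^ (-((k + 2 : ℕ) : ℤ) - 1) * (σ : ℝ) ^ (2 * (k + 2)) =
          (σ : ℝ) ^ (k + 1) := by
        rw [← zpow_natCast, ← zpow_natCast, ← zpow_add₀ hσ0.ne']
        congr 1
        push_cast
        ring
      rw [mul_assoc, he]
      have : (σ : ℝ) ^ (k + 2) = σ * (σ : ℝ) ^ (k + 1) := by ring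
      linarith)
  have hsplit : Icc 1 (n / 2) = insert 1 (Icc 2 (n / 2)) := by
    ext x
    simp only [Finset.mem_Icc, Finset.mem_insert]
    omega
  rw [hsplit, Finset.sum_insert (by simp)] at key
  have h3 := Finset.sum_le_sum h2
  rw [← Finset.mul_sum] at h3
  simp only [Nat.cast_one, mul_one] at h1 key
  refine le_of_mul_le_mul_left ?_ (pow_pos hσ0 n)
  rw [mul_add, mul_add, mul_one]
  linarith
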